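/- Let p > r ≥ 2 be integers and μ > 0 with μ r ≤ p/8. Let U, V, L, R ∈ O_{p,r} all be μ-incoherent. Suppose the first rows satisfy Uᵀe₁ = a·e₁ and Lᵀe₁ = b·e₁ for reals a, b with 0 ≤ a ≤ b. Then r − ⟨UᵀL, VᵀR⟩ ≥ (p/(32 μ r³))·a²·(R_{1,1} − V_{1,1})², where R_{1,1} and V_{1,1} are the (1,1) entries of R and V, and ⟨A,B⟩ = Tr(A Bᵀ) is the Frobenius inner product. -/

import Mathlib

open Matrix
open scoped BigOperators RealInnerProductSpace

noncomputable def frobNorm {m n : Type*} [Fintype m] [Fintype n] (M : Matrix m n ℝ) : ℝ :=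
  Real.sqrt (∑ i, ∑ j, (M i j) ^ 2)

noncomputable def frobInner {m n : Type*} [Fintype m] [Fintype n] (A B : Matrix m n ℝ) : ℝ :=
  ∑ i, ∑ j, A i j * B i j

noncomputable def maxNorm {m n : Type*} [Fintype m] [Fintype n] (M : Matrix m n ℝ) : ℝ :=
  ⨆ i, ⨆ j, |M i j|

noncomputable def l0Norm {m n : Type*} (M : Matrix m n ℝ) : ℕ :=
  Set.ncard {ij : m × n | M ij.1 ij.2 ≠ 0}

noncomputable def specNorm {p q : ℕ} (M : Matrix (Fin p) (Fin q) ℝ) : ℝ :=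
  ‖LinearMap.toContinuousLinearMap (Matrix.toEuclideanLin M)‖

def Incoherent {p r : ℕ} (μ : ℝ) (U : Matrix (Fin p) (Fin r) ℝ) : Prop :=
  ∀ i, Real.sqrt (∑ j, (U i j) ^ 2) ≤ Real.sqrt (μ * r / p)

def SepProp (p r : ℕ) (μ c : ℝ) : Prop :=
  ∀ (U V L R : Matrix (Fin p) (Fin r) ℝ) (S Lam : Matrix (Fin r) (Fin r) ℝ),
    Uᵀ * U = 1 → Vᵀ * V = 1 → Lᵀ * L = 1 → Rᵀ * R = 1 →
    Incoherent μ U → Incoherent μ V → Incoherent μ L → Incoherent μ R →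
    S.IsDiag → (∀ i, 0 ≤ S i i) → Lam.IsDiag → (∀ i, 0 ≤ Lam i i) →
    maxNorm (U * S * Vᵀ - L * Lam * Rᵀ) ^ 2 ≤
      (c * μ * (r : ℝ) ^ 4 / p) * frobNorm (U * S * Vᵀ - L * Lam * Rᵀ) ^ 2

noncomputable def l1Norm {m n : Type*} [Fintype m] [Fintype n] (M : Matrix m n ℝ) : ℝ :=
  ∑ i, ∑ j, |M i j|

noncomputable def nuclearNorm {p q : ℕ} (M : Matrix (Fin p) (Fin q) ℝ) : ℝ :=
  sSup {x : ℝ | ∃ X : Matrix (Fin p) (Fin q) ℝ, specNorm X ≤ 1 ∧ x = frobInner M X}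

noncomputable def Phi {p : ℕ} (lam : ℝ) (Δ : Matrix (Fin p) (Fin p) ℝ) : ℝ :=
  sInf {x : ℝ | ∃ L S : Matrix (Fin p) (Fin p) ℝ, L + S = Δ ∧ x = nuclearNorm L + lam * l1Norm S}

theorem frobInner_self_nonneg {m n : Type*} [Fintype m] [Fintype n] (M : Matrix m n ℝ) :
    0 ≤ frobInner M M :=
  Finset.sum_nonneg fun i _ => Finset.sum_nonneg fun j _ => mul_self_nonneg (M i j)

theorem frobInner_eq_trace {m n : Type*} [Fintype m] [Fintype n] (A B : Matrix m n ℝ) :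
    frobInner A B = (Aᵀ * B).trace := by
  simp only [frobInner, Matrix.trace, Matrix.diag, Matrix.mul_apply, Matrix.transpose_apply]
  exact Finset.sum_comm

theorem frobInner_transpose {m n : Type*} [Fintype m] [Fintype n] (A B : Matrix m n ℝ) :
    frobInner Aᵀ Bᵀ = frobInner A B :=
  Finset.sum_comm

theorem frobInner_sub_self {m n : Type*} [Fintype m] [Fintype n] (A B : Matrix m n ℝ) :
    frobInner (A - B) (A - B) = frobInner A A + frobInner B B - 2 * frobInner A B := by
  simp only [frobInner, Finset.mul_sum, ← Finset.sum_add_distrib, ← Finset.sum_sub_distrib,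
    Matrix.sub_apply]
  exact Finset.sum_congr rfl fun i _ => Finset.sum_congr rfl fun j _ => by ring

theorem row_sq_sum_le_frobInner_self {m n : Type*} [Fintype m] [Fintype n]
    (M : Matrix m n ℝ) (i : m) : ∑ j, M i j ^ 2 ≤ frobInner M M := by
  simp only [frobInner, ← pow_two]
  exact Finset.single_le_sum (f := fun i => ∑ j, M i j ^ 2)
    (fun _ _ => Finset.sum_nonneg fun _ _ => sq_nonneg _) (Finset.mem_univ i)

theorem sq_apply_le_frobInner_self {m n : Type*} [Fintype m] [Fintype n]
    (M : Matrix m n ℝ) (i : m) (j : n) : M i j ^ 2 ≤ frobInner M M :=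
  (Finset.single_le_sum (f := fun j => M i j ^ 2) (fun _ _ => sq_nonneg _)
    (Finset.mem_univ j)).trans (row_sq_sum_le_frobInner_self M i)

/-- The squared distance from the columns of `L` to the column space of `U`. -/
theorem frobInner_sub_proj_self {p r : ℕ} (U L : Matrix (Fin p) (Fin r) ℝ)
    (hU : Uᵀ * U = 1) (hL : Lᵀ * L = 1) :
    frobInner (L - U * (Uᵀ * L)) (L - U * (Uᵀ * L)) = r - frobInner (Uᵀ * L) (Uᵀ * L) := by
  have h : (L - U * (Uᵀ * L))ᵀ * (L - U * (Uᵀ * L)) = 1 - (Uᵀ * L)ᵀ * (Uᵀ * L) := by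
    have h₁ : Lᵀ * U * Uᵀ * U * Uᵀ * L = Lᵀ * U * Uᵀ * L := by
      rw [Matrix.mul_assoc (Lᵀ * U) Uᵀ U, hU, Matrix.mul_one]
    simp only [Matrix.transpose_sub, Matrix.transpose_mul, Matrix.transpose_transpose,
      Matrix.sub_mul, Matrix.mul_sub, ← Matrix.mul_assoc, hL, h₁]
    abel
  rw [frobInner_eq_trace, h, Matrix.trace_sub, frobInner_eq_trace]
  simp

theorem transpose_mul_apply_le_one {p r : ℕ} (U L : Matrix (Fin p) (Fin r) ℝ)
    (hU : Uᵀ * U = 1) (hL : Lᵀ * L = 1) (i j : Fin r) : (Uᵀ * L) i j ≤ 1 := by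
  have h₁ : ∑ k, U k i * U k i = 1 := by
    simpa [Matrix.mul_apply] using congrFun (congrFun hU i) i
  have h₂ : ∑ k, L k j * L k j = 1 := by
    simpa [Matrix.mul_apply] using congrFun (congrFun hL j) j
  have h₃ : 2 * ∑ k, U k i * L k j ≤ ∑ k, U k i * U k i + ∑ k, L k j * L k j := by
    rw [Finset.mul_sum, ← Finset.sum_add_distrib]
    exact Finset.sum_le_sum fun k _ => by nlinarith [sq_nonneg (U k i - L k j)]
  simp only [Matrix.mul_apply, Matrix.transpose_apply]
  linarith

/-- If the first rows of `U` and `L` are `a e₀` and `b e₀` with `0 ≤ a ≤ b`, then the first column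
of `Uᵀ L` is close to `e₀`. -/
theorem sq_mul_first_col_sub_le {p r : ℕ} (U L : Matrix (Fin p) (Fin r) ℝ)
    (hU : Uᵀ * U = 1) (hL : Lᵀ * L = 1) (i₀ : Fin p) (j₀ : Fin r) (a b : ℝ)
    (ha : 0 ≤ a) (hab : a ≤ b)
    (hUrow : ∀ j, U i₀ j = if j = j₀ then a else 0)
    (hLrow : ∀ j, L i₀ j = if j = j₀ then b else 0) :
    a ^ 2 * ∑ j, ((Uᵀ * L) j j₀ - if j = j₀ then 1 else 0) ^ 2 ≤
      2 * (r - frobInner (Uᵀ * L) (Uᵀ * L)) := by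
  have hle := transpose_mul_apply_le_one U L hU hL j₀ j₀
  have hT : Lᵀ * U = (Uᵀ * L)ᵀ := by simp
  have h₁ := frobInner_sub_proj_self U L hU hL
  have h₂ := frobInner_sub_proj_self L U hL hU
  rw [hT, frobInner_transpose] at h₂
  set A := Uᵀ * L
  have e₁ : (L - U * A) i₀ j₀ = b - a * A j₀ j₀ := by
    simp [Matrix.mul_apply, hUrow, hLrow]
  have e₂ : ∀ j, (U - L * Aᵀ) i₀ j = (if j = j₀ then a else 0) - b * A j j₀ := fun j => by
    simp [Matrix.mul_apply, hUrow, hLrow]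
  have k₁ := sq_apply_le_frobInner_self (L - U * A) i₀ j₀
  have k₂ := row_sq_sum_le_frobInner_self (U - L * Aᵀ) i₀
  rw [e₁, h₁] at k₁
  rw [h₂] at k₂
  have key : a ^ 2 * ∑ j, (A j j₀ - if j = j₀ then 1 else 0) ^ 2 ≤
      ∑ j, ((U - L * Aᵀ) i₀ j ^ 2 + if j = j₀ then (b - a * A j₀ j₀) ^ 2 else 0) := by
    rw [Finset.mul_sum]
    refine Finset.sum_le_sum fun j _ => ?_
    rw [e₂]
    split_ifs with h
    · subst h
      have h₀ : 0 ≤ a * (1 - A j j) := mul_nonneg ha (by linarith)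
      nlinarith [sq_nonneg (a - b * A j j)]
    · have : a ^ 2 ≤ b ^ 2 := pow_le_pow_left₀ ha hab 2
      nlinarith [mul_le_mul_of_nonneg_right this (sq_nonneg (A j j₀))]
  rw [Finset.sum_add_distrib, Finset.sum_ite_eq' Finset.univ j₀] at key
  simp only [Finset.mem_univ, if_true] at key
  linarith

theorem Incoherent.row_sq_sum_le {p r : ℕ} {μ : ℝ} (hμ : 0 ≤ μ)
    {U : Matrix (Fin p) (Fin r) ℝ} (hU : Incoherent μ U) (i : Fin p) :
    ∑ j, U i j ^ 2 ≤ μ * r / p :=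
  (Real.sqrt_le_sqrt_iff (by positivity)).1 (hU i)

/-- discrepancy lemma for the first entries of the right singular
vectors — r − ⟨UᵀL, VᵀR⟩ ≥ (p/(32μr³))·a²·(R₁₁ − V₁₁)². -/
theorem stmt8 (p r : ℕ) (hr2 : 2 ≤ r) (hrp : r < p)
    (μ : ℝ) (hμ : 0 < μ) (hμr : μ * (r : ℝ) ≤ (p : ℝ) / 8)
    (U V L R : Matrix (Fin p) (Fin r) ℝ)
    (hUo : Uᵀ * U = 1) (hVo : Vᵀ * V = 1) (hLo : Lᵀ * L = 1) (hRo : Rᵀ * R = 1)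
    (hUi : Incoherent μ U) (hVi : Incoherent μ V)
    (hLi : Incoherent μ L) (hRi : Incoherent μ R)
    (a b : ℝ) (ha : 0 ≤ a) (hab : a ≤ b)
    (hUrow : ∀ j : Fin r, U ⟨0, by omega⟩ j = if j = ⟨0, by omega⟩ then a else 0)
    (hLrow : ∀ j : Fin r, L ⟨0, by omega⟩ j = if j = ⟨0, by omega⟩ then b else 0) :
    (r : ℝ) - frobInner (Uᵀ * L) (Vᵀ * R) ≥
      ((p : ℝ) / (32 * μ * (r : ℝ) ^ 3)) * a ^ 2 *
        (R ⟨0, by omega⟩ (⟨0, by omega⟩ : Fin r) -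
          V ⟨0, by omega⟩ (⟨0, by omega⟩ : Fin r)) ^ 2 := by
  have hp : (0 : ℝ) < p := by exact_mod_cast (by omega : 0 < p)
  have hr : (2 : ℝ) ≤ r := by exact_mod_cast hr2
  have hcoef : (p : ℝ) / (32 * μ * (r : ℝ) ^ 3) = 1 / (32 * (r : ℝ) ^ 2 * (μ * r / p)) := by
    field_simp
  set i₀ : Fin p := ⟨0, by omega⟩
  set j₀ : Fin r := ⟨0, by omega⟩
  have hcol := sq_mul_first_col_sub_le U L hUo hLo i₀ j₀ a b ha hab hUrow hLrow
  have hPA := frobInner_sub_proj_self U L hUo hLo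
  have hPB := frobInner_sub_proj_self V R hVo hRo
  set A := Uᵀ * L
  set B := Vᵀ * R
  have hAB := frobInner_sub_self A B
  have nA := frobInner_self_nonneg (L - U * A)
  have nB := frobInner_self_nonneg (R - V * B)
  have nAB := frobInner_self_nonneg (A - B)
  set δ := (r : ℝ) - frobInner A B with hδ
  set κ := μ * r / p with hκ
  have hκpos : 0 < κ := by positivity
  have hκle : κ ≤ 1 / 8 := by
    rw [hκ, div_le_iff₀ hp]
    linarith
  have hδ0 : 0 ≤ δ := by linarith
  have hv : ∑ j, V i₀ j ^ 2 ≤ κ := hVi.row_sq_sum_le hμ.le i₀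
  have ha2 : a ^ 2 ≤ κ := by
    have h := (Finset.single_le_sum (f := fun j => U i₀ j ^ 2) (fun _ _ => sq_nonneg _)
      (Finset.mem_univ j₀)).trans (hUi.row_sq_sum_le hμ.le i₀)
    simpa [hUrow] using h
  set x := (R - V * B) i₀ j₀ with hx
  set y := ∑ j, V i₀ j * (B j j₀ - A j j₀) with hy
  set z := ∑ j, V i₀ j * (A j j₀ - if j = j₀ then 1 else 0) with hz
  have hdecomp : R i₀ j₀ - V i₀ j₀ = x + y + z := by
    simp only [hx, hy, hz, Matrix.sub_apply, Matrix.mul_apply, mul_sub, Finset.sum_sub_distrib,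
      mul_ite, mul_one, mul_zero, Finset.sum_ite_eq', Finset.mem_univ, if_true]
    ring
  have hx2 : x ^ 2 ≤ 2 * δ := by
    have := sq_apply_le_frobInner_self (R - V * B) i₀ j₀
    linarith
  have hy2 : y ^ 2 ≤ κ * (2 * δ) := by
    refine (Finset.sum_mul_sq_le_sq_mul_sq _ _ _).trans
      (mul_le_mul hv ?_ (Finset.sum_nonneg fun _ _ => sq_nonneg _) hκpos.le)
    have h := row_sq_sum_le_frobInner_self (A - B)ᵀ j₀
    rw [frobInner_transpose] at h
    have e : ∑ j, (B j j₀ - A j j₀) ^ 2 = ∑ j, (A - B)ᵀ j₀ j ^ 2 :=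
      Finset.sum_congr rfl fun j _ => by
        simp only [Matrix.transpose_apply, Matrix.sub_apply]
        ring
    linarith
  have hz2 : a ^ 2 * z ^ 2 ≤ κ * (4 * δ) := by
    have h : z ^ 2 ≤ κ * ∑ j, (A j j₀ - if j = j₀ then 1 else 0) ^ 2 :=
      (Finset.sum_mul_sq_le_sq_mul_sq _ _ _).trans
        (mul_le_mul_of_nonneg_right hv (Finset.sum_nonneg fun _ _ => sq_nonneg _))
    calc a ^ 2 * z ^ 2
        ≤ a ^ 2 * (κ * ∑ j, (A j j₀ - if j = j₀ then 1 else 0) ^ 2) := by gcongr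
      _ = κ * (a ^ 2 * ∑ j, (A j j₀ - if j = j₀ then 1 else 0) ^ 2) := by ring
      _ ≤ κ * (4 * δ) := mul_le_mul_of_nonneg_left (by linarith) hκpos.le
  have hax : a ^ 2 * x ^ 2 ≤ κ * (2 * δ) := mul_le_mul ha2 hx2 (sq_nonneg _) hκpos.le
  have hay : a ^ 2 * y ^ 2 ≤ κ * (2 * δ) := by
    have h₁ : a ^ 2 * y ^ 2 ≤ κ * (κ * (2 * δ)) := mul_le_mul ha2 hy2 (sq_nonneg _) hκpos.le
    have h₂ : κ * (2 * δ) ≤ 1 * (2 * δ) := by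
      gcongr
      linarith
    nlinarith
  have hsum : a ^ 2 * (R i₀ j₀ - V i₀ j₀) ^ 2 ≤ 24 * (κ * δ) := by
    rw [hdecomp]
    have h : (x + y + z) ^ 2 ≤ 3 * (x ^ 2 + y ^ 2 + z ^ 2) := by
      nlinarith [sq_nonneg (x - y), sq_nonneg (y - z), sq_nonneg (x - z)]
    have := mul_le_mul_of_nonneg_left h (sq_nonneg a)
    linarith
  have hfin : 24 * (κ * δ) ≤ δ * (32 * (r : ℝ) ^ 2 * κ) := by
    have : 0 ≤ κ * δ := by positivity
    have hr24 : (0 : ℝ) ≤ 32 * (r : ℝ) ^ 2 - 24 := by nlinarith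
    linarith [mul_nonneg this hr24]
  rw [ge_iff_le, hcoef, mul_assoc, one_div_mul_eq_div, div_le_iff₀ (by positivity)]
  exact hsum.trans hfin
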